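/- Let 1/2 < σ < 3/2, 0 < β ≤ 1/2 and c > 0. There exist constants c₁ > 0 and c₂ > 0 depending only on σ and c such that the following holds. Suppose X : [0, T_X) → (0, ∞) is continuously differentiable, satisfies X'(t) = c·X(t)^(1+4/(1+2σ)) + c·(βt)^(4/(2σ−1))·X(t)^(1+4/(2σ−1)) for all t ∈ [0, T_X), and T_X < ∞ is its maximal existence time, i.e. X(t) → ∞ as t → T_X from the left. Set Q = c₂ · X(0)^(−4/(1+2σ)). If X(0) ≥ c₁ · β^(−(2σ+1)/2), then T_X > Q; if X(0) < c₁ · β^(−(2σ+1)/2), then T_X > min{Q, Q^(1/2)}. -/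

import Mathlib

/-!
Until `X` has doubled, the right-hand side is at most its value `M` at time `T_X` and height
`2 X(0)`. Blow-up requires doubling, so `X(0) ≤ M T_X`. Write `p = 4/(1+2σ)` and `q = 4/(2σ-1)`.
Since `q = p + pq/2`, the time-dependent term of `M` is `X(0)^(1+p)` times a constant times
`(β T_X X(0)^(p/2))^q`. If `T_X ≤ min {Q, Q^(1/2)}` with `c₂` small, then `T_X X(0)^(p/2) ≤ 1`,
hence `M ≲ X(0)^(1+p)`, and `T_X ≤ Q` contradicts the doubling bound. With `c₁ = 1`, the threshold
`X(0) ≥ c₁ β^(-(2σ+1)/2)` forces `X(0) ≥ 1`, so `Q ≤ 1` and the minimum is `Q`.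
-/

open Set Filter Topology

section BlowUp

variable {f f' : ℝ → ℝ} {a b K M : ℝ}

theorem image_le_of_deriv_right_lt_of_image_le (hf : ContinuousOn f (Ico a b))
    (hf' : ∀ x ∈ Ico a b, HasDerivWithinAt f (f' x) (Ici x) x) (ha : f a ≤ K)
    (hb : f a + M * (b - a) ≤ K) (bound : ∀ x ∈ Ico a b, f x ≤ K → f' x < M) :
    ∀ x ∈ Ico a b, f x ≤ K := by
  have line_le : ∀ x ∈ Ico a b, f a + M * (x - a) ≤ K := by
    rintro x ⟨hax, hxb⟩
    rcases le_total 0 M with hM | hM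
    · have : M * (x - a) ≤ M * (b - a) := by gcongr
      linarith
    · linarith [mul_nonpos_of_nonpos_of_nonneg hM (sub_nonneg.2 hax)]
  intro y hy
  have hsub : Icc a y ⊆ Ico a b := Icc_subset_Ico_right hy.2
  have hsub' : Ico a y ⊆ Ico a b := Ico_subset_Icc_self.trans hsub
  have hline (x : ℝ) : HasDerivAt (fun x ↦ f a + M * (x - a)) M x := by
    simpa using (((hasDerivAt_id x).sub_const a).const_mul M).const_add (f a)
  have below_line : f y ≤ f a + M * (y - a) :=
    image_le_of_deriv_right_lt_deriv_boundary (B := fun x ↦ f a + M * (x - a)) (hf.mono hsub)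
      (fun x hx ↦ hf' x (hsub' hx)) (by simp) hline
      (fun x hx hfx ↦ bound x (hsub' hx) (hfx.trans_le (line_le x (hsub' hx)))) ⟨hy.1, le_rfl⟩
  exact below_line.trans (line_le y hy)

theorem sub_le_mul_sub_of_tendsto_atTop (hab : a < b) (hf : ContinuousOn f (Ico a b))
    (hf' : ∀ x ∈ Ico a b, HasDerivWithinAt f (f' x) (Ici x) x) (ha : f a ≤ K)
    (bound : ∀ x ∈ Ico a b, f x ≤ K → f' x ≤ M) (hlim : Tendsto f (𝓝[<] b) atTop) :
    K - f a ≤ M * (b - a) := by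
  by_contra! hlt
  have hba : 0 < b - a := sub_pos.2 hab
  have slope_gt : M < (K - f a) / (b - a) := (lt_div_iff₀ hba).2 hlt
  have hle : ∀ x ∈ Ico a b, f x ≤ K :=
    image_le_of_deriv_right_lt_of_image_le hf hf' ha (by rw [div_mul_cancel₀ _ hba.ne']; linarith)
      fun x hx hfx ↦ (bound x hx hfx).trans_lt slope_gt
  obtain ⟨x, hKx, hx⟩ := ((hlim.eventually_gt_atTop K).and (Ico_mem_nhdsLT hab)).exists
  exact (hle x hx).not_gt hKx

end BlowUp

/-- The right-hand side of the equation as a function of the height `x`, with exponents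
`p = 4/(1+2σ)` and `q = 4/(2σ-1)`. The time enters only through `r = β t`. -/
noncomputable def growthRate (p q c r x : ℝ) : ℝ :=
  c * x ^ (1 + p) + c * r ^ q * x ^ (1 + q)

/-- The constant `c₂` in the lower bound for the blow-up time. The summand `1` makes it at most `1`
and makes its product with the constant of `growthRate_mul_le` for `k = 2` less than `1`. -/
noncomputable def lifespanConst (p q c : ℝ) : ℝ :=
  (c * (2 ^ (1 + p) + 2 ^ (1 + q)) + 1)⁻¹

section Scaling

variable {p q c : ℝ}

theorem growthRate_le_growthRate {r s x y : ℝ} (hp : 0 ≤ p) (hq : 0 ≤ q) (hc : 0 ≤ c)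
    (hr : 0 ≤ r) (hrs : r ≤ s) (hx : 0 ≤ x) (hxy : x ≤ y) :
    growthRate p q c r x ≤ growthRate p q c s y := by
  have hs : 0 ≤ s := hr.trans hrs
  unfold growthRate
  gcongr

theorem growthRate_mul_le {k r x : ℝ} (hq : 0 ≤ q) (hpq : q = p + p * q / 2) (hc : 0 ≤ c)
    (hk : 0 ≤ k) (hr : 0 ≤ r) (hx : 0 < x) (hrx : r * x ^ (p / 2) ≤ 1) :
    growthRate p q c r (k * x) ≤ c * (k ^ (1 + p) + k ^ (1 + q)) * x ^ (1 + p) := by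
  have hpow : x ^ (1 + q) = x ^ (1 + p) * (x ^ (p / 2)) ^ q := by
    rw [← Real.rpow_mul hx.le, ← Real.rpow_add hx]
    congr 1
    linarith
  have hle : (r * x ^ (p / 2)) ^ q ≤ 1 := Real.rpow_le_one (by positivity) hrx hq
  calc growthRate p q c r (k * x)
      = c * (k ^ (1 + p) + k ^ (1 + q) * (r * x ^ (p / 2)) ^ q) * x ^ (1 + p) := by
        rw [growthRate, Real.mul_rpow hk hx.le, Real.mul_rpow hk hx.le, hpow,
          Real.mul_rpow hr (by positivity)]
        ring
    _ ≤ c * (k ^ (1 + p) + k ^ (1 + q) * 1) * x ^ (1 + p) := by gcongr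
    _ = c * (k ^ (1 + p) + k ^ (1 + q)) * x ^ (1 + p) := by rw [mul_one]

theorem lifespanConst_pos (hc : 0 ≤ c) : 0 < lifespanConst p q c := by
  unfold lifespanConst
  positivity

theorem lifespanConst_le_one (hc : 0 ≤ c) : lifespanConst p q c ≤ 1 :=
  inv_le_one_of_one_le₀ (le_add_of_nonneg_left (by positivity))

theorem mul_lifespanConst_lt_one (hc : 0 ≤ c) :
    c * (2 ^ (1 + p) + 2 ^ (1 + q)) * lifespanConst p q c < 1 := by
  rw [lifespanConst, ← div_eq_mul_inv, div_lt_one (by positivity)]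
  exact lt_add_one _

theorem min_lt_of_le_growthRate_mul {β T x : ℝ} (hq : 0 ≤ q) (hpq : q = p + p * q / 2)
    (hc : 0 ≤ c) (hβ₀ : 0 ≤ β) (hβ₁ : β ≤ 1) (hT : 0 ≤ T) (hx : 0 < x)
    (h : x ≤ growthRate p q c (β * T) (2 * x) * T) :
    min (lifespanConst p q c * x ^ (-p)) ((lifespanConst p q c * x ^ (-p)) ^ ((1 : ℝ) / 2))
      < T := by
  by_contra! hle
  obtain ⟨hT_le, hT_le_sqrt⟩ := le_min_iff.1 hle
  have hc₂ : 0 < lifespanConst p q c := lifespanConst_pos hc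
  have hTx : T * x ^ p ≤ lifespanConst p q c := by
    rwa [Real.rpow_neg hx.le, ← div_eq_mul_inv, le_div_iff₀ (by positivity)] at hT_le
  have hTx_half : T * x ^ (p / 2) ≤ 1 := by
    calc T * x ^ (p / 2)
        ≤ (lifespanConst p q c * x ^ (-p)) ^ ((1 : ℝ) / 2) * x ^ (p / 2) := by gcongr
      _ = lifespanConst p q c ^ ((1 : ℝ) / 2) * x ^ (-p * (1 / 2) + p / 2) := by
        rw [Real.mul_rpow hc₂.le (by positivity), ← Real.rpow_mul hx.le, mul_assoc,
          Real.rpow_add hx]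
      _ = lifespanConst p q c ^ ((1 : ℝ) / 2) := by
        rw [show -p * (1 / 2) + p / 2 = 0 by ring, Real.rpow_zero, mul_one]
      _ ≤ 1 := Real.rpow_le_one hc₂.le (lifespanConst_le_one hc) (by norm_num)
  have hβTx : β * T * x ^ (p / 2) ≤ 1 := by
    rw [mul_assoc]
    exact mul_le_one₀ hβ₁ (by positivity) hTx_half
  refine lt_irrefl x ?_
  calc x ≤ growthRate p q c (β * T) (2 * x) * T := h
    _ ≤ c * (2 ^ (1 + p) + 2 ^ (1 + q)) * x ^ (1 + p) * T := by
      gcongr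
      exact growthRate_mul_le hq hpq hc zero_le_two (by positivity) hx hβTx
    _ = c * (2 ^ (1 + p) + 2 ^ (1 + q)) * (T * x ^ p) * x := by
      rw [Real.rpow_add hx, Real.rpow_one]
      ring
    _ ≤ c * (2 ^ (1 + p) + 2 ^ (1 + q)) * lifespanConst p q c * x := by gcongr
    _ < 1 * x := by gcongr; exact mul_lifespanConst_lt_one hc
    _ = x := one_mul x

theorem lifespanConst_mul_rpow_neg_le_rpow_half {x : ℝ} (hp : 0 ≤ p) (hc : 0 ≤ c) (hx : 1 ≤ x) :
    lifespanConst p q c * x ^ (-p) ≤ (lifespanConst p q c * x ^ (-p)) ^ ((1 : ℝ) / 2) := by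
  have hc₂ : 0 < lifespanConst p q c := lifespanConst_pos hc
  have hle_one : lifespanConst p q c * x ^ (-p) ≤ 1 :=
    mul_le_one₀ (lifespanConst_le_one hc) (by positivity)
      (Real.rpow_le_one_of_one_le_of_nonpos hx (neg_nonpos.2 hp))
  exact Real.self_le_rpow_of_le_one (by positivity) hle_one (by norm_num)

theorem min_lt_of_deriv_le_growthRate {β T : ℝ} {X X' : ℝ → ℝ} (hp : 0 ≤ p) (hq : 0 ≤ q)
    (hpq : q = p + p * q / 2) (hc : 0 ≤ c) (hβ₀ : 0 ≤ β) (hβ₁ : β ≤ 1) (hT : 0 < T)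
    (hX : ∀ t ∈ Ico 0 T, 0 < X t) (hX' : ∀ t ∈ Ico 0 T, HasDerivWithinAt X (X' t) (Ico 0 T) t)
    (hle : ∀ t ∈ Ico 0 T, X' t ≤ growthRate p q c (β * t) (X t))
    (hlim : Tendsto X (𝓝[<] T) atTop) :
    min (lifespanConst p q c * X 0 ^ (-p)) ((lifespanConst p q c * X 0 ^ (-p)) ^ ((1 : ℝ) / 2))
      < T := by
  have hX₀ : 0 < X 0 := hX 0 ⟨le_rfl, hT⟩
  have hderiv : ∀ t ∈ Ico 0 T, HasDerivWithinAt X (X' t) (Ici t) t := fun t ht ↦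
    (hX' t ht).mono_of_mem_nhdsWithin (Ico_mem_nhdsGE_of_mem ht)
  have bound : ∀ t ∈ Ico 0 T, X t ≤ 2 * X 0 → X' t ≤ growthRate p q c (β * T) (2 * X 0) :=
    fun t ht hXt ↦ (hle t ht).trans <|
      growthRate_le_growthRate hp hq hc (mul_nonneg hβ₀ ht.1)
        (mul_le_mul_of_nonneg_left ht.2.le hβ₀) (hX t ht).le hXt
  have doubling : 2 * X 0 - X 0 ≤ growthRate p q c (β * T) (2 * X 0) * (T - 0) :=
    sub_le_mul_sub_of_tendsto_atTop hT (fun t ht ↦ (hX' t ht).continuousWithinAt) hderiv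
      (by linarith) bound hlim
  exact min_lt_of_le_growthRate_mul hq hpq hc hβ₀ hβ₁ hT.le hX₀ (by linarith)

end Scaling

theorem stmt15_general (σ c : ℝ) (hσ : 1 / 2 < σ) (hc : 0 < c) :
    ∃ c₂ : ℝ, 0 < c₂ ∧
      ∀ β TX : ℝ, 0 ≤ β → β ≤ 1 → 0 < TX →
      ∀ X X' : ℝ → ℝ,
        (∀ t ∈ Ico 0 TX, 0 < X t) →
        (∀ t ∈ Ico 0 TX, HasDerivWithinAt X (X' t) (Ico 0 TX) t) →
        (∀ t ∈ Ico 0 TX,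
          X' t ≤ c * X t ^ (1 + 4 / (1 + 2 * σ))
            + c * (β * t) ^ (4 / (2 * σ - 1)) * X t ^ (1 + 4 / (2 * σ - 1))) →
        Tendsto X (𝓝[<] TX) atTop →
        (1 ≤ X 0 → c₂ * X 0 ^ (-(4 / (1 + 2 * σ))) < TX) ∧
          min (c₂ * X 0 ^ (-(4 / (1 + 2 * σ))))
            ((c₂ * X 0 ^ (-(4 / (1 + 2 * σ)))) ^ ((1 : ℝ) / 2)) < TX := by
  have hσ_sub : 0 < 2 * σ - 1 := by linarith
  have hp : 0 ≤ 4 / (1 + 2 * σ) := by positivity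
  have hq : 0 ≤ 4 / (2 * σ - 1) := by positivity
  have hpq : 4 / (2 * σ - 1) = 4 / (1 + 2 * σ) + 4 / (1 + 2 * σ) * (4 / (2 * σ - 1)) / 2 := by
    field_simp
    ring
  refine ⟨lifespanConst (4 / (1 + 2 * σ)) (4 / (2 * σ - 1)) c, lifespanConst_pos hc.le, ?_⟩
  intro β TX hβ₀ hβ₁ hTX X X' hX hX' hle hlim
  have hmin := min_lt_of_deriv_le_growthRate hp hq hpq hc.le hβ₀ hβ₁ hTX hX hX' hle hlim
  refine ⟨fun hX₀ ↦ ?_, hmin⟩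
  rwa [min_eq_left (lifespanConst_mul_rpow_neg_le_rpow_half hp hc.le hX₀)] at hmin

/-- lower bound on the blow-up time of the non-autonomous ODE
`X' = c X^{1+4/(1+2σ)} + c (βt)^{4/(2σ−1)} X^{1+4/(2σ−1)}` for `1/2 < σ < 3/2`,
with constants `c₁, c₂` depending only on `σ` and `c`. -/
theorem stmt15 (σ c : ℝ) (hσ1 : 1 / 2 < σ) (hσ2 : σ < 3 / 2) (hc : 0 < c) :
    ∃ c₁ : ℝ, 0 < c₁ ∧ ∃ c₂ : ℝ, 0 < c₂ ∧
      ∀ β TX : ℝ, 0 < β → β ≤ 1 / 2 → 0 < TX →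
      ∀ X X' : ℝ → ℝ,
        (∀ t ∈ Set.Ico (0 : ℝ) TX, 0 < X t) →
        (∀ t ∈ Set.Ico (0 : ℝ) TX, HasDerivWithinAt X (X' t) (Set.Ico (0 : ℝ) TX) t) →
        (∀ t ∈ Set.Ico (0 : ℝ) TX, ContinuousWithinAt X' (Set.Ico (0 : ℝ) TX) t) →
        (∀ t ∈ Set.Ico (0 : ℝ) TX,
          X' t = c * X t ^ (1 + 4 / (1 + 2 * σ))
            + c * (β * t) ^ (4 / (2 * σ - 1)) * X t ^ (1 + 4 / (2 * σ - 1))) →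
        Filter.Tendsto X (nhdsWithin TX (Set.Iio TX)) Filter.atTop →
        ((c₁ * β ^ (-((2 * σ + 1) / 2)) ≤ X 0 →
            c₂ * X 0 ^ (-(4 / (1 + 2 * σ))) < TX) ∧
         (X 0 < c₁ * β ^ (-((2 * σ + 1) / 2)) →
            min (c₂ * X 0 ^ (-(4 / (1 + 2 * σ))))
              ((c₂ * X 0 ^ (-(4 / (1 + 2 * σ)))) ^ ((1 : ℝ) / 2)) < TX)) := by
  obtain ⟨c₂, hc₂, H⟩ := stmt15_general σ c hσ1 hc
  refine ⟨1, one_pos, c₂, hc₂, fun β TX hβ hβ_half hTX X X' hX hX' _ hode hlim ↦ ?_⟩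
  have one_le_rpow : 1 ≤ β ^ (-((2 * σ + 1) / 2)) :=
    Real.one_le_rpow_of_pos_of_le_one_of_nonpos hβ (by linarith) (by linarith)
  exact (H β TX hβ.le (by linarith) hTX X X' hX hX' (fun t ht ↦ (hode t ht).le) hlim).imp
    (fun hlarge hX₀ ↦ hlarge (by linarith)) fun hmin _ ↦ hmin
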